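/- Let A be a pushdown timed automaton with pattern graph G. For any states s₀ and s₁, any pattern η, any stack words w₀ and w₁, and any discrete valuations u₀, u₁ : K → ℕ with u₀(0) = 0: (s₀,u₀,w₀) →*_{A,η} (s₁,u₁,w₁) iff (s₀, init(η), u₀, w₀) →*_G (s₁, η, u₁, w₁). -/

import Mathlib

open scoped BigOperators

namespace PTApaper

/-! ## Clock valuations -/

/-- A (raw) clock valuation on clocks `x_0, …, x_k`. -/
abbrev Val (k : ℕ) := Fin (k+1) → ℝ

/-- A discrete clock valuation. -/
abbrev DVal (k : ℕ) := Fin (k+1) → ℕ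

/-- A clock valuation takes nonnegative values. -/
def IsVal {k : ℕ} (v : Val k) : Prop := ∀ i, 0 ≤ v i

/-- A valuation is initial if the auxiliary clock `x_0` has value 0. -/
def Initial {k : ℕ} (v : Val k) : Prop := v 0 = 0

/-- The integral part `int(v)` of a valuation. -/
noncomputable def intPart {k : ℕ} (v : Val k) : DVal k := fun i => (⌊v i⌋).toNat

/-- The fractional parts of the relative representation `rel(v)`:
`fract(rel(v))(0) = fract (1 - fract (v 0))` and
`fract(rel(v))(i) = fract (fract (v i) + fract(rel(v))(0))` for `i ∈ K⁺`. -/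
noncomputable def relFract {k : ℕ} (v : Val k) : Fin (k+1) → ℝ := fun i =>
  if i = 0 then Int.fract (1 - Int.fract (v 0))
  else Int.fract (Int.fract (v i) + Int.fract (1 - Int.fract (v 0)))

/-- Synchronous clock progress `v + δ`. -/
def shift {k : ℕ} (v : Val k) (δ : ℝ) : Val k := fun i => v i + δ

/-- Clock reset `v↓_r`. -/
def resetVal {k : ℕ} (r : Finset (Fin (k+1))) (v : Val k) : Val k :=
  fun i => if i ∈ r then 0 else v i

/-! ## Patterns -/

/-- A raw pattern: a finite sequence of subsets of `K⁰ ∪ K¹`, where the index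
`(i, false)` stands for `i⁰` and `(i, true)` stands for `i¹`. -/
abbrev PatSeq (k : ℕ) := List (Finset (Fin (k+1) × Bool))

/-- The well-formedness conditions making `η = p₀,…,p_n` a pattern:
`0 ≤ n < 2(k+1)`, the `p_m` are nonempty and pairwise disjoint, `0⁰ ∈ p₀`,
and `p₀ ∪ … ∪ p_n = K⁰ ∪ K¹`. -/
def IsPattern {k : ℕ} (η : PatSeq k) : Prop :=
  η.length ≤ 2*(k+1) ∧
  (∀ p ∈ η, p.Nonempty) ∧
  η.Pairwise Disjoint ∧
  ((0 : Fin (k+1)), false) ∈ η.getD 0 ∅ ∧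
  (∀ x : Fin (k+1) × Bool, ∃ p ∈ η, x ∈ p)

/-- `bval v₀ v₁ b` is `v_b`. -/
def bval {k : ℕ} (v₀ v₁ : Val k) : Bool → Val k
  | false => v₀
  | true => v₁

/-- The defining ordering condition for "`(v₀,v₁)` has pattern `η = p₀,…,p_n`":
for all positions `m, m'`, copies `b, b'` and clocks `i, i'` with `i^b ∈ p_m` and
`i'^{b'} ∈ p_{m'}`, `fract(rel(v_b))(i) = fract(rel(v_{b'}))(i')` iff `m = m'`, and
`fract(rel(v_b))(i) < fract(rel(v_{b'}))(i')` iff `m < m'`. -/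
def HasPatternOrd {k : ℕ} (v₀ v₁ : Val k) (η : PatSeq k) : Prop :=
  ∀ m m' : Fin η.length, ∀ b b' : Bool, ∀ i i' : Fin (k+1),
    (i, b) ∈ η.get m → (i', b') ∈ η.get m' →
      ((relFract (bval v₀ v₁ b) i = relFract (bval v₀ v₁ b') i' ↔ m = m') ∧
       (relFract (bval v₀ v₁ b) i < relFract (bval v₀ v₁ b') i' ↔ (m : ℕ) < (m' : ℕ)))

/-- `(v₀,v₁)` has pattern `η` (written `[(v₀,v₁)] = η`). -/
def PatternOf {k : ℕ} (v₀ v₁ : Val k) (η : PatSeq k) : Prop :=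
  IsPattern η ∧ HasPatternOrd v₀ v₁ η

/-- A pattern is initial if it is the pattern of `(v₀,v₀)` for some initial valuation `v₀`. -/
def InitialPattern {k : ℕ} (η : PatSeq k) : Prop :=
  ∃ v₀ : Val k, IsVal v₀ ∧ Initial v₀ ∧ PatternOf v₀ v₀ η

/-- The equivalence `(v₀¹,v₁) ≈ (v₀²,v₂)`: same pattern and same integral parts. -/
def PairEquiv {k : ℕ} (va vb vc vd : Val k) : Prop :=
  (∃ η : PatSeq k, PatternOf va vb η ∧ PatternOf vc vd η) ∧
  intPart va = intPart vc ∧ intPart vb = intPart vd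

/-! ## now-position, Next, next, reset -/

/-- The index of the now-position, i.e. the position containing `0¹`. -/
def nowIdx {k : ℕ} (η : PatSeq k) : ℕ :=
  η.findIdx fun p => decide (((0 : Fin (k+1)), true) ∈ p)

/-- A merge-pattern: the now-position is the singleton `{0¹}`. -/
def IsMergePat {k : ℕ} (η : PatSeq k) : Prop :=
  η.getD (nowIdx η) ∅ = ({((0 : Fin (k+1)), true)} : Finset (Fin (k+1) × Bool))

/-- A split-pattern: a pattern that is not a merge-pattern. -/
def IsSplitPat {k : ℕ} (η : PatSeq k) : Prop := ¬ IsMergePat η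

/-- The next pattern `Next(η)`. -/
def NextPat {k : ℕ} (η : PatSeq k) : PatSeq k :=
  let i := nowIdx η
  if η.getD i ∅ = ({((0 : Fin (k+1)), true)} : Finset (Fin (k+1) × Bool)) then
    -- merge case : `p₀, …, p_{i-1} ∪ {0¹}, p_{i+1}, …, p_n`
    η.take (i-1) ++ [η.getD (i-1) ∅ ∪ {((0 : Fin (k+1)), true)}] ++ η.drop (i+1)
  else if i = 0 then
    -- split case with `i = 0` : `p₀ ∖ {0¹}, p₁, …, p_n, {0¹}`
    (η.getD 0 ∅ \ {((0 : Fin (k+1)), true)}) :: (η.drop 1 ++ [{((0 : Fin (k+1)), true)}])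
  else
    -- split case with `i > 0` : `p₀, …, p_{i-1}, {0¹}, p_i ∖ {0¹}, p_{i+1}, …, p_n`
    η.take i ++ [{((0 : Fin (k+1)), true)}, η.getD i ∅ \ {((0 : Fin (k+1)), true)}]
      ++ η.drop (i+1)

/-- The counter update of `next(η,u)`. -/
def nextD {k : ℕ} (η : PatSeq k) (u : DVal k) : DVal k :=
  let i := nowIdx η
  if η.getD i ∅ = ({((0 : Fin (k+1)), true)} : Finset (Fin (k+1) × Bool)) then
    fun j =>
      if j = 0 then (if i = 1 then u 0 + 1 else u 0)
      else (if (j, true) ∈ η.getD (i-1) ∅ then u j + 1 else u j)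
  else u

/-- `next(η,u)`. -/
def nextPair {k : ℕ} (η : PatSeq k) (u : DVal k) : PatSeq k × DVal k :=
  (NextPat η, nextD η u)

/-- The pattern part of `reset_r(η,u)`: all indices `j¹`, `j ∈ r`, are moved into the
now-position, and entries that become empty are deleted. -/
def ResetPat {k : ℕ} (r : Finset (Fin (k+1))) (η : PatSeq k) : PatSeq k :=
  let r1 : Finset (Fin (k+1) × Bool) := r.image (fun j => (j, true))
  let i := nowIdx η
  (η.mapIdx (fun m p => if m = i then p ∪ r1 else p \ r1)).filter (fun p => decide (p ≠ ∅))

/-- The counter update of `reset_r(η,u)`. -/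
def resetD {k : ℕ} (r : Finset (Fin (k+1))) (u : DVal k) : DVal k :=
  fun j => if j ∈ r then 0 else u j

/-- `reset_r(η,u)`. -/
def resetPair {k : ℕ} (r : Finset (Fin (k+1))) (η : PatSeq k) (u : DVal k) :
    PatSeq k × DVal k :=
  (ResetPat r η, resetD r u)

/-! ## Pattern changes -/

/-- `v` has no pattern change for `δ`. -/
def NoChange {k : ℕ} (v₀ v : Val k) (δ : ℝ) : Prop :=
  ∃ η : PatSeq k, PatternOf v₀ v η ∧
    ∀ δ', 0 ≤ δ' → δ' ≤ δ → PatternOf v₀ (shift v δ') η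

/-- `v` has one pattern change for `δ`. -/
def OneChange {k : ℕ} (v₀ v : Val k) (δ : ℝ) : Prop :=
  ∃ η η' : PatSeq k, PatternOf v₀ v η ∧ PatternOf v₀ (shift v δ) η' ∧
    NextPat η = η' ∧
    ((∀ δ', 0 < δ' → δ' < δ → PatternOf v₀ (shift v δ') η) ∨
     (∀ δ', 0 < δ' → δ' < δ → PatternOf v₀ (shift v δ') η'))

/-- `v` has `n` pattern changes for `δ` (for `n ≥ 1`): `δ = δ₁ + … + δ_n` with each
`δ_j > 0` and `v + δ₁ + … + δ_j` has one pattern change for `δ_{j+1}`. -/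
def NChanges {k : ℕ} (v₀ v : Val k) (n : ℕ) (δ : ℝ) : Prop :=
  ∃ d : ℕ → ℝ, (∀ j < n, 0 < d j) ∧ (∑ j ∈ Finset.range n, d j) = δ ∧
    ∀ j < n, OneChange v₀ (shift v (∑ j' ∈ Finset.range j, d j')) (d j)

/-! ## Clock constraints -/

/-- Comparison operators `<, ≤, =, ≥, >`. -/
inductive CCmp | lt | le | eq | ge | gt

/-- Evaluation of a comparison operator on reals. -/
def CCmp.evalR : CCmp → ℝ → ℝ → Prop
  | .lt, a, b => a < b
  | .le, a, b => a ≤ b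
  | .eq, a, b => a = b
  | .ge, a, b => a ≥ b
  | .gt, a, b => a > b

/-- Clock constraints over the clocks `x_1, …, x_k` (indexed by `Fin k`, clock
`x_{i+1}` for `i : Fin k`): Boolean combinations of `x_i - x_j # d` and `x_i # d`. -/
inductive CC (k : ℕ)
  | diff (i j : Fin k) (op : CCmp) (d : ℕ) : CC k
  | single (i : Fin k) (op : CCmp) (d : ℕ) : CC k
  | not (c : CC k) : CC k
  | and (c₁ c₂ : CC k) : CC k

/-- `v ∈ c` : the valuation `v` satisfies the clock constraint `c`. -/
def CC.sat {k : ℕ} (v : Val k) : CC k → Prop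
  | .diff i j op d => op.evalR (v i.succ - v j.succ) (d : ℝ)
  | .single i op d => op.evalR (v i.succ) (d : ℝ)
  | .not c => ¬ c.sat v
  | .and c₁ c₂ => c₁.sat v ∧ c₂.sat v

/-- The position (in `η`) of an index `x ∈ K⁰ ∪ K¹`. -/
def posOf {k : ℕ} (η : PatSeq k) (x : Fin (k+1) × Bool) : ℕ :=
  η.findIdx fun p => decide (x ∈ p)

/-- The truth value, given by pattern `η`, of the fractional ordering
`fract(x_a) > fract(x_b)`. -/
def fracGtP {k : ℕ} (η : PatSeq k) (a b : Fin (k+1)) : Prop :=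
  let i := posOf η ((0 : Fin (k+1)), true)
  let m₁ := posOf η (a, true)
  let m₂ := posOf η (b, true)
  (m₁ < i ∧ i ≤ m₂) ∨ (m₂ < m₁ ∧ m₁ < i) ∨ (i ≤ m₂ ∧ m₂ < m₁)

/-- The truth value, given by pattern `η`, of `fract(x_a) = fract(x_b)`. -/
def fracEqP {k : ℕ} (η : PatSeq k) (a b : Fin (k+1)) : Prop :=
  posOf η (a, true) = posOf η (b, true)

/-- The truth value, given by pattern `η`, of `fract(x_a) = 0`. -/
def fracZeroP {k : ℕ} (η : PatSeq k) (a : Fin (k+1)) : Prop :=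
  posOf η (a, true) = posOf η ((0 : Fin (k+1)), true)

/-- `u ∈ c^η` : the discrete valuation `u` satisfies the constraint `c^η`, obtained by
rewriting `c` as `I(c)` over integral parts and fractional orderings and substituting the
truth values of the fractional orderings determined by the pattern `η`. -/
def CC.satP {k : ℕ} (η : PatSeq k) (u : DVal k) : CC k → Prop
  | .diff i j op d =>
      let I : ℤ := (u i.succ : ℤ) - (u j.succ : ℤ)
      (match op with
      | .lt => I < d ∨ (I = d ∧ fracGtP η j.succ i.succ)
      | .le => I < d ∨ (I = d ∧ (fracGtP η j.succ i.succ ∨ fracEqP η i.succ j.succ))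
      | .eq => I = d ∧ fracEqP η i.succ j.succ
      | .ge => I > d ∨ (I = d ∧ (fracGtP η i.succ j.succ ∨ fracEqP η i.succ j.succ))
      | .gt => I > d ∨ (I = d ∧ fracGtP η i.succ j.succ))
  | .single i op d =>
      let I : ℤ := (u i.succ : ℤ)
      (match op with
      | .lt => I < d
      | .le => I < d ∨ (I = d ∧ fracZeroP η i.succ)
      | .eq => I = d ∧ fracZeroP η i.succ
      | .ge => I ≥ d
      | .gt => I > d ∨ (I = d ∧ ¬ fracZeroP η i.succ))
  | .not c => ¬ c.satP η u
  | .and c₁ c₂ => c₁.satP η u ∧ c₂.satP η u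

/-! ## Pushdown timed automata -/

/-- A pushdown timed automaton `⟨S, {x₁,…,x_k}, Inv, R, Γ, PD⟩`:
`Inv` assigns an invariant to each state, `R s s' = (Rc s s', Rr s s')` assigns a reset
condition and a set of clock resets (a subset of `K⁺`) to each edge, and
`PD s s' = (PDa s s', PDw s s')` assigns a stack operation to each edge. -/
structure PTA (k : ℕ) (S : Type) (Γ : Type) where
  Inv : S → CC k
  Rc : S → S → CC k
  Rr : S → S → Finset (Fin (k+1))
  hRr : ∀ s s', (0 : Fin (k+1)) ∉ Rr s s'
  PDa : S → S → Γ
  PDw : S → S → List Γ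

/-- A configuration `(s, v, w)` of a PTA. -/
abbrev Config (k : ℕ) (S Γ : Type) := S × Val k × List Γ

/-- The one-step transition relation `→_A` of a PTA. -/
def Step {k : ℕ} {S Γ : Type} (A : PTA k S Γ) (c₁ c₂ : Config k S Γ) : Prop :=
  -- progress transition
  (c₁.1 = c₂.1 ∧ c₁.2.2 = c₂.2.2 ∧
    ∃ δ : ℝ, 0 < δ ∧ c₂.2.1 = shift c₁.2.1 δ ∧
      ∀ δ', 0 ≤ δ' → δ' ≤ δ → (A.Inv c₁.1).sat (shift c₁.2.1 δ')) ∨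
  -- reset transition
  ((A.Inv c₁.1).sat c₁.2.1 ∧ (A.Rc c₁.1 c₂.1).sat c₁.2.1 ∧
    c₂.2.1 = resetVal (A.Rr c₁.1 c₂.1) c₁.2.1 ∧ (A.Inv c₂.1).sat c₂.2.1 ∧
    ∃ w : List Γ, c₁.2.2 = A.PDa c₁.1 c₂.1 :: w ∧ c₂.2.2 = A.PDw c₁.1 c₂.1 ++ w)

/-- `→*_A`, the transitive closure of `→_A`. -/
def Reach {k : ℕ} {S Γ : Type} (A : PTA k S Γ) : Config k S Γ → Config k S Γ → Prop :=
  Relation.TransGen (Step A)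

/-- `(s₀,u₀,w₀) →*_{A,η} (s₁,u₁,w₁)`. -/
def ReachPat {k : ℕ} {S Γ : Type} (A : PTA k S Γ) (η : PatSeq k)
    (s₀ : S) (u₀ : DVal k) (w₀ : List Γ) (s₁ : S) (u₁ : DVal k) (w₁ : List Γ) : Prop :=
  ∃ v₀ v₁ : Val k, IsVal v₀ ∧ IsVal v₁ ∧ v₀ 0 = 0 ∧
    intPart v₀ = u₀ ∧ intPart v₁ = u₁ ∧ PatternOf v₀ v₁ η ∧
    Reach A (s₀, v₀, w₀) (s₁, v₁, w₁)

/-! ## The pattern graph -/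

/-- A configuration `(s, η, u, w)` of the pattern graph. -/
abbrev GConfig (k : ℕ) (S Γ : Type) := S × PatSeq k × DVal k × List Γ

/-- The one-step transition relation `→_G` of the pattern graph `G` of a PTA `A`,
through progress edges, stay edges and reset edges. -/
def GStep {k : ℕ} {S Γ : Type} (A : PTA k S Γ) (c₁ c₂ : GConfig k S Γ) : Prop :=
  -- progress edge
  (c₁.1 = c₂.1 ∧ c₁.2.2.2 = c₂.2.2.2 ∧
    nextPair c₁.2.1 c₁.2.2.1 = (c₂.2.1, c₂.2.2.1) ∧
    (A.Inv c₁.1).satP c₁.2.1 c₁.2.2.1 ∧ (A.Inv c₁.1).satP c₂.2.1 c₂.2.2.1) ∨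
  -- stay edge
  (c₁ = c₂ ∧ IsMergePat c₁.2.1 ∧ (A.Inv c₁.1).satP c₁.2.1 c₁.2.2.1) ∨
  -- reset edge
  (resetPair (A.Rr c₁.1 c₂.1) c₁.2.1 c₁.2.2.1 = (c₂.2.1, c₂.2.2.1) ∧
    ((A.Rc c₁.1 c₂.1).and (A.Inv c₁.1)).satP c₁.2.1 c₁.2.2.1 ∧
    (A.Inv c₂.1).satP c₂.2.1 c₂.2.2.1 ∧
    ∃ w : List Γ, c₁.2.2.2 = A.PDa c₁.1 c₂.1 :: w ∧ c₂.2.2.2 = A.PDw c₁.1 c₂.1 ++ w)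

/-- `→*_G`, the transitive closure of `→_G`. -/
def GReach {k : ℕ} {S Γ : Type} (A : PTA k S Γ) : GConfig k S Γ → GConfig k S Γ → Prop :=
  Relation.TransGen (GStep A)

end PTApaper
namespace PTApaper

section Aux
variable {k : ℕ}

def Good (f : Fin (k+1) × Bool → ℝ) (η : PatSeq k) : Prop :=
  (∀ p ∈ η, p.Nonempty) ∧ (∀ x, ∃ p ∈ η, x ∈ p) ∧
  η.Pairwise (fun p q => ∀ x ∈ p, ∀ y ∈ q, f x < f y) ∧
  ∀ p ∈ η, ∀ x ∈ p, ∀ y ∈ p, f x = f y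

noncomputable def FF (v₀ v : Val k) : Fin (k+1) × Bool → ℝ :=
  fun x => relFract (bval v₀ v x.2) x.1

theorem relFract_zero (v : Val k) : relFract v 0 = Int.fract (- v 0) := by
  unfold relFract
  simp only [if_true]
  rw [Int.fract_eq_fract]
  exact ⟨1 + ⌊v 0⌋, by rw [Int.fract]; push_cast; ring⟩

theorem relFract_ne (v : Val k) {i : Fin (k+1)} (hi : i ≠ 0) :
    relFract v i = Int.fract (v i - v 0) := by
  have h0 := relFract_zero v
  unfold relFract at h0 ⊢
  simp only [if_true] at h0
  rw [if_neg hi, h0, Int.fract_eq_fract]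
  exact ⟨-⌊v i⌋ - ⌊- v 0⌋, by simp only [Int.fract]; push_cast; ring⟩

theorem FF_nonneg (v₀ v : Val k) (x) : 0 ≤ FF v₀ v x := by
  unfold FF relFract; split_ifs <;> exact Int.fract_nonneg _

theorem FF_lt_one (v₀ v : Val k) (x) : FF v₀ v x < 1 := by
  unfold FF relFract; split_ifs <;> exact Int.fract_lt_one _

theorem FF_zf {v₀ : Val k} (h : v₀ 0 = 0) (v : Val k) : FF v₀ v (0, false) = 0 := by
  simp [FF, bval, relFract_zero, h]

theorem FF_zt (v₀ v : Val k) : FF v₀ v (0, true) = Int.fract (- v 0) := by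
  simp [FF, bval, relFract_zero]

theorem FF_t (v₀ v : Val k) {i : Fin (k+1)} (hi : i ≠ 0) :
    FF v₀ v (i, true) = Int.fract (v i - v 0) := by
  simp [FF, bval, relFract_ne v hi]

theorem FF_shift (v₀ v : Val k) (δ : ℝ) (x) (hx : x ≠ ((0 : Fin (k+1)), true)) :
    FF v₀ (shift v δ) x = FF v₀ v x := by
  obtain ⟨i, b⟩ := x
  cases b
  · rfl
  · have hi : i ≠ 0 := by rintro rfl; exact hx rfl
    rw [FF_t _ _ hi, FF_t _ _ hi]
    simp [shift]

theorem FF_reset (v₀ v : Val k) (r : Finset (Fin (k+1))) (hr : (0 : Fin (k+1)) ∉ r) (x) :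
    FF v₀ (resetVal r v) x = if x ∈ r.image (fun j => (j, true)) then FF v₀ v (0, true)
      else FF v₀ v x := by
  obtain ⟨i, b⟩ := x
  cases b
  · simp [FF, bval]
  · by_cases hi : i = 0
    · subst hi
      simp [FF_zt, resetVal, hr]
    · rw [FF_t _ _ hi, FF_t _ _ hi, FF_zt]
      by_cases hir : i ∈ r <;> simp [resetVal, hir, hr]

theorem fract_j (v₀ v : Val k) {j : Fin (k+1)} (hj : j ≠ 0) :
    Int.fract (v j) = Int.fract (FF v₀ v (j, true) - FF v₀ v (0, true)) := by
  rw [FF_t _ _ hj, FF_zt, Int.fract_eq_fract]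
  exact ⟨⌊v j - v 0⌋ - ⌊- v 0⌋, by simp only [Int.fract]; push_cast; ring⟩

theorem fract_z (v₀ v : Val k) :
    Int.fract (v 0) = Int.fract (- FF v₀ v (0, true)) := by
  rw [FF_zt, Int.fract_eq_fract]
  exact ⟨- ⌊- v 0⌋, by simp only [Int.fract]; push_cast; ring⟩

theorem FF_shift_z (v₀ v : Val k) (δ : ℝ) :
    FF v₀ (shift v δ) (0, true) = Int.fract (FF v₀ v (0, true) - δ) := by
  rw [FF_zt, FF_zt, Int.fract_eq_fract]
  exact ⟨⌊- v 0⌋, by simp only [Int.fract, shift]; ring⟩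

/-! Good vs PatternOf -/

theorem Good.get_lt {f : Fin (k+1) × Bool → ℝ} {η : PatSeq k} (h : Good f η)
    (m m' : Fin η.length) {x y} (hx : x ∈ η.get m) (hy : y ∈ η.get m') :
    (f x = f y ↔ m = m') ∧ (f x < f y ↔ (m : ℕ) < (m' : ℕ)) := by
  obtain ⟨-, -, h3, h4⟩ := h
  rw [List.pairwise_iff_get] at h3
  rcases lt_trichotomy m m' with hm | hm | hm
  · have := h3 m m' hm x hx y hy
    have hm' : (m : ℕ) < m' := hm
    exact ⟨⟨fun e => absurd e this.ne, fun e => absurd e hm.ne⟩, fun _ => hm', fun _ => this⟩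
  · subst hm
    have := h4 _ (List.get_mem η m) x hx y hy
    simp [this]
  · have := h3 m' m hm y hy x hx
    have hm' : (m' : ℕ) < m := hm
    exact ⟨⟨fun e => absurd e this.ne', fun e => absurd e hm.ne'⟩,
      fun e => absurd e this.not_gt, fun e => absurd e hm'.not_gt⟩

theorem good_of_pattern {v₀ v : Val k} {η : PatSeq k} (h : PatternOf v₀ v η) :
    Good (FF v₀ v) η := by
  obtain ⟨⟨-, h1, -, -, h2⟩, h3⟩ := h
  refine ⟨h1, h2, ?_, ?_⟩
  · rw [List.pairwise_iff_get]
    intro m m' hm x hx y hy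
    exact (h3 m m' x.2 y.2 x.1 y.1 hx hy).2.2 hm
  · intro p hp x hx y hy
    obtain ⟨m, rfl⟩ := List.get_of_mem hp
    exact (h3 m m x.2 y.2 x.1 y.1 hx hy).1.2 rfl

theorem pattern_of_good {v₀ v : Val k} {η : PatSeq k} (h0 : v₀ 0 = 0)
    (h : Good (FF v₀ v) η) : PatternOf v₀ v η := by
  have hget := fun m m' x y => h.get_lt m m' (x := x) (y := y)
  obtain ⟨h1, h2, h3, h4⟩ := h
  refine ⟨⟨?_, h1, ?_, ?_, h2⟩, ?_⟩
  · have : ∀ m : Fin η.length, ∃ x, x ∈ η.get m := fun m => h1 _ (List.get_mem η m)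
    choose g hg using this
    have hinj : Function.Injective g := by
      intro m m' hmm
      exact (hget m m' _ _ (hg m) (hg m')).1.1 (by rw [hmm])
    have := Fintype.card_le_of_injective g hinj
    simp at this
    omega
  · refine h3.imp ?_
    intro p q hpq
    rw [Finset.disjoint_left]
    intro x hx hx'
    exact lt_irrefl _ (hpq x hx x hx')
  · obtain ⟨p, hp, hz⟩ := h2 (0, false)
    cases η with
    | nil => simp at hp
    | cons p0 R =>
      rcases List.mem_cons.1 hp with rfl | hp'
      · simpa using hz
      · obtain ⟨x, hx⟩ := h1 p0 (by simp)
        have := (List.pairwise_cons.1 h3).1 p hp' x hx _ hz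
        rw [FF_zf h0] at this
        exact absurd this (FF_nonneg _ _ _).not_gt
  · intro m m' b b' i i' hi hi'
    exact hget m m' (i, b) (i', b') hi hi'

theorem posOf_spec {η : PatSeq k} {x} (h : ∃ p ∈ η, x ∈ p) :
    ∃ hl : posOf η x < η.length, x ∈ η.get ⟨posOf η x, hl⟩ := by
  have hl : posOf η x < η.length := by
    unfold posOf
    apply List.findIdx_lt_length_of_exists
    simpa using h
  refine ⟨hl, ?_⟩
  have := List.findIdx_getElem (p := fun p => decide (x ∈ p)) (xs := η) (w := hl)
  exact of_decide_eq_true this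

theorem Good.pos {f : Fin (k+1) × Bool → ℝ} {η : PatSeq k} (h : Good f η) (x y) :
    (posOf η x = posOf η y ↔ f x = f y) ∧ (posOf η x < posOf η y ↔ f x < f y) := by
  obtain ⟨hl, hx⟩ := posOf_spec (h.2.1 x)
  obtain ⟨hl', hy⟩ := posOf_spec (h.2.1 y)
  have := h.get_lt _ _ hx hy
  rw [this.1, this.2]
  simp

/-- transfer of Good along order-equivalence -/
theorem Good.transfer {f g : Fin (k+1) × Bool → ℝ} {η : PatSeq k} (h : Good f η)
    (hfg : ∀ x y, f x < f y ↔ g x < g y) : Good g η := by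
  obtain ⟨h1, h2, h3, h4⟩ := h
  refine ⟨h1, h2, h3.imp ?_, ?_⟩
  · intro p q hpq x hx y hy
    exact (hfg x y).1 (hpq x hx y hy)
  · intro p hp x hx y hy
    have := h4 p hp x hx y hy
    apply le_antisymm <;> rw [← not_lt, ← hfg] <;> simp [this]

theorem Good.mem_iff {f : Fin (k+1) × Bool → ℝ} {η : PatSeq k} (h : Good f η) (p) :
    p ∈ η ↔ ∃ x, p = Finset.univ.filter (fun y => f y = f x) := by
  have key : ∀ p ∈ η, ∀ x ∈ p, p = Finset.univ.filter (fun y => f y = f x) := by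
    intro p hp x hx
    ext y
    simp only [Finset.mem_filter, Finset.mem_univ, true_and]
    constructor
    · intro hy; exact h.2.2.2 p hp y hy x hx
    · intro hxy
      obtain ⟨q, hq, hy⟩ := h.2.1 y
      obtain ⟨m, rfl⟩ := List.get_of_mem hp
      obtain ⟨m', rfl⟩ := List.get_of_mem hq
      have := (h.get_lt m' m hy hx).1.1 hxy
      subst this
      exact hy
  constructor
  · intro hp
    obtain ⟨x, hx⟩ := h.1 p hp
    exact ⟨x, key p hp x hx⟩
  · rintro ⟨x, rfl⟩
    obtain ⟨q, hq, hx⟩ := h.2.1 x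
    rw [← key q hq x hx]
    exact hq

theorem Good.unique {f : Fin (k+1) × Bool → ℝ} {η η' : PatSeq k} (h : Good f η)
    (h' : Good f η') : η = η' := by
  let r : Finset (Fin (k+1) × Bool) → Finset (Fin (k+1) × Bool) → Prop :=
    fun p q => p.Nonempty ∧ q.Nonempty ∧ ∀ x ∈ p, ∀ y ∈ q, f x < f y
  have hr : ∀ {η : PatSeq k}, Good f η → η.Pairwise r := by
    intro η h
    refine h.2.2.1.imp_of_mem ?_
    intro p q hp hq hpq
    exact ⟨h.1 p hp, h.1 q hq, hpq⟩
  have : Std.Irrefl r := ⟨by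
    rintro p ⟨⟨x, hx⟩, -, hp⟩
    exact lt_irrefl _ (hp x hx x hx)⟩
  have : Std.Antisymm r := ⟨by
    rintro p q ⟨⟨x, hx⟩, ⟨y, hy⟩, h1⟩ ⟨-, -, h2⟩
    exact absurd (h1 x hx y hy) (h2 y hy x hx).not_gt⟩
  exact List.Pairwise.eq_of_mem_iff (hr h) (hr h') (fun p => by rw [h.mem_iff, h'.mem_iff])

/-! constraints -/

theorem intPart_cast {v : Val k} (hv : IsVal v) (i) : ((intPart v i : ℕ) : ℤ) = ⌊v i⌋ := by
  unfold intPart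
  exact Int.toNat_of_nonneg (Int.floor_nonneg.2 (hv i))

theorem fract_sub_of_le {a b : ℝ} (ha : a < 1) (hb : 0 ≤ b) (h : b ≤ a) :
    Int.fract (a - b) = a - b := Int.fract_eq_self.2 ⟨by linarith, by linarith⟩

theorem fract_sub_of_lt {a b : ℝ} (ha : 0 ≤ a) (hb : b < 1) (h : a < b) :
    Int.fract (a - b) = a - b + 1 := by
  rw [← Int.fract_add_one]
  exact Int.fract_eq_self.2 ⟨by linarith, by linarith⟩

theorem fract_fj (v₀ v : Val k) {j : Fin (k+1)} (hj : j ≠ 0) :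
    (FF v₀ v (0, true) ≤ FF v₀ v (j, true) ∧
      Int.fract (v j) = FF v₀ v (j, true) - FF v₀ v (0, true)) ∨
    (FF v₀ v (j, true) < FF v₀ v (0, true) ∧
      Int.fract (v j) = FF v₀ v (j, true) - FF v₀ v (0, true) + 1) := by
  rw [fract_j v₀ v hj]
  rcases le_or_gt (FF v₀ v (0, true)) (FF v₀ v (j, true)) with h | h
  · exact Or.inl ⟨h, fract_sub_of_le (FF_lt_one _ _ _) (FF_nonneg _ _ _) h⟩
  · exact Or.inr ⟨h, fract_sub_of_lt (FF_nonneg _ _ _) (FF_lt_one _ _ _) h⟩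

theorem fract_f0 (v₀ v : Val k) :
    (FF v₀ v (0, true) = 0 ∧ Int.fract (v 0) = 0) ∨
    (0 < FF v₀ v (0, true) ∧ Int.fract (v 0) = 1 - FF v₀ v (0, true)) := by
  rw [fract_z v₀ v]
  have h1 := FF_lt_one v₀ v (0, true)
  rcases (FF_nonneg v₀ v (0, true)).eq_or_lt with h | h
  · left; rw [← h]; simp
  · right; refine ⟨h, ?_⟩
    rw [← zero_sub, fract_sub_of_lt le_rfl h1 h]; ring

theorem fracGt_iff {v₀ v : Val k} {η : PatSeq k} (h : Good (FF v₀ v) η)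
    {a b : Fin (k+1)} (ha : a ≠ 0) (hb : b ≠ 0) :
    fracGtP η a b ↔ Int.fract (v b) < Int.fract (v a) := by
  unfold fracGtP
  simp only [(h.pos _ _).2, ← not_lt]
  simp only [not_lt]
  have := FF_nonneg v₀ v (a, true)
  have := FF_nonneg v₀ v (b, true)
  have := FF_lt_one v₀ v (a, true)
  have := FF_lt_one v₀ v (b, true)
  rcases fract_fj v₀ v ha with ⟨h1, e1⟩ | ⟨h1, e1⟩ <;>
  rcases fract_fj v₀ v hb with ⟨h2, e2⟩ | ⟨h2, e2⟩ <;> rw [e1, e2] <;> grind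

theorem fracEq_iff {v₀ v : Val k} {η : PatSeq k} (h : Good (FF v₀ v) η)
    {a b : Fin (k+1)} (ha : a ≠ 0) (hb : b ≠ 0) :
    fracEqP η a b ↔ Int.fract (v a) = Int.fract (v b) := by
  unfold fracEqP
  rw [(h.pos _ _).1]
  have := FF_nonneg v₀ v (a, true)
  have := FF_nonneg v₀ v (b, true)
  have := FF_lt_one v₀ v (a, true)
  have := FF_lt_one v₀ v (b, true)
  rcases fract_fj v₀ v ha with ⟨h1, e1⟩ | ⟨h1, e1⟩ <;>
  rcases fract_fj v₀ v hb with ⟨h2, e2⟩ | ⟨h2, e2⟩ <;> rw [e1, e2] <;> grind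

theorem fracZero_iff {v₀ v : Val k} {η : PatSeq k} (h : Good (FF v₀ v) η)
    {a : Fin (k+1)} (ha : a ≠ 0) :
    fracZeroP η a ↔ Int.fract (v a) = 0 := by
  unfold fracZeroP
  rw [(h.pos _ _).1]
  have := FF_nonneg v₀ v (a, true)
  have := FF_lt_one v₀ v (0, true)
  rcases fract_fj v₀ v ha with ⟨h1, e1⟩ | ⟨h1, e1⟩ <;> rw [e1] <;> grind

theorem int_tri (I d : ℤ) : (I : ℝ) + 1 ≤ d ∧ I < d ∨ I = d ∨ (d : ℝ) + 1 ≤ I ∧ d < I := by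
  rcases lt_trichotomy I d with h | h | h
  · left; exact ⟨by exact_mod_cast h, h⟩
  · right; left; exact h
  · right; right; exact ⟨by exact_mod_cast h, h⟩

theorem sat_iff {v₀ v : Val k} {η : PatSeq k} (h : Good (FF v₀ v) η) (hv : IsVal v) (c : CC k) :
    c.sat v ↔ c.satP η (intPart v) := by
  induction c with
  | not c ih => simp [CC.sat, CC.satP, ih]
  | and c₁ c₂ ih₁ ih₂ => simp [CC.sat, CC.satP, ih₁, ih₂]
  | single i op d =>
    have hi := Fin.succ_ne_zero i
    have hz := fracZero_iff h hi
    have e := Int.floor_add_fract (v i.succ)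
    have := Int.fract_nonneg (v i.succ)
    have := Int.fract_lt_one (v i.succ)
    have hT := int_tri ⌊v i.succ⌋ d
    rw [Int.cast_natCast] at hT
    cases op <;> simp only [CC.sat, CC.satP, CCmp.evalR, intPart_cast hv, hz] <;>
    · generalize Int.fract (v i.succ) = a at *
      generalize ⌊v i.succ⌋ = I at *
      rw [← e]
      rcases hT with ⟨hT, hT'⟩ | hT | ⟨hT, hT'⟩
      · grind
      · subst hT; simp; try grind
      · grind
  | diff i j op d =>
    have hi := Fin.succ_ne_zero i
    have hj := Fin.succ_ne_zero j
    have hz := fracEq_iff h hi hj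
    have hg := fracGt_iff h hi hj
    have hg' := fracGt_iff h hj hi
    have e := Int.floor_add_fract (v i.succ)
    have e' := Int.floor_add_fract (v j.succ)
    have := Int.fract_nonneg (v i.succ)
    have := Int.fract_lt_one (v i.succ)
    have := Int.fract_nonneg (v j.succ)
    have := Int.fract_lt_one (v j.succ)
    have hT := int_tri (⌊v i.succ⌋ - ⌊v j.succ⌋) d
    rw [Int.cast_natCast, Int.cast_sub] at hT
    cases op <;> simp only [CC.sat, CC.satP, CCmp.evalR, intPart_cast hv, hz, hg, hg'] <;>
    · generalize Int.fract (v i.succ) = a at *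
      generalize ⌊v i.succ⌋ = I at *
      generalize Int.fract (v j.succ) = b at *
      generalize ⌊v j.succ⌋ = J at *
      rw [← e, ← e']
      rcases hT with ⟨hT, hT'⟩ | hT | ⟨hT, hT'⟩
      · grind
      · have hT' : (I : ℝ) - J = d := by exact_mod_cast hT
        simp [hT]; try grind
      · grind
/-! list computations -/

theorem nowIdx_eq {L R : PatSeq k} {p} (hL : ∀ q ∈ L, ((0 : Fin (k+1)), true) ∉ q)
    (hp : ((0 : Fin (k+1)), true) ∈ p) : nowIdx (L ++ p :: R) = L.length := by
  unfold nowIdx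
  induction L with
  | nil => simp [List.findIdx_cons, hp]
  | cons a L ih =>
    have := hL a (by simp)
    have ih := ih (fun q hq => hL q (by simp [hq]))
    simp [List.findIdx_cons, this, ih]

theorem now_getD {L R : PatSeq k} {p} (hL : ∀ q ∈ L, ((0 : Fin (k+1)), true) ∉ q)
    (hp : ((0 : Fin (k+1)), true) ∈ p) :
    (L ++ p :: R).getD (nowIdx (L ++ p :: R)) ∅ = p := by
  rw [nowIdx_eq hL hp]; simp [List.getD]

theorem next_merge {L R : PatSeq k} {q} (hL : ∀ q ∈ L, ((0 : Fin (k+1)), true) ∉ q)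
    (hq : ((0 : Fin (k+1)), true) ∉ q) :
    NextPat (L ++ q :: {((0 : Fin (k+1)), true)} :: R) =
      L ++ (q ∪ {((0 : Fin (k+1)), true)}) :: R := by
  have e : L ++ q :: {((0 : Fin (k+1)), true)} :: R =
      (L ++ [q]) ++ {((0 : Fin (k+1)), true)} :: R := by simp
  have hL' : ∀ q' ∈ L ++ [q], ((0 : Fin (k+1)), true) ∉ q' := by
    simp only [List.mem_append, List.mem_singleton]
    rintro q' (h | rfl)
    · exact hL _ h
    · exact hq
  have h1 := now_getD (R := R) hL' (Finset.mem_singleton_self ((0 : Fin (k+1)), true))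
  have h2 := nowIdx_eq (R := R) hL' (Finset.mem_singleton_self ((0 : Fin (k+1)), true))
  rw [e]
  unfold NextPat
  simp only [h1, if_true]
  rw [h2]
  have hd : List.drop ((L ++ [q]).length + 1) (L ++ [q] ++ {((0 : Fin (k+1)), true)} :: R) = R := by
    rw [List.drop_append, List.drop_eq_nil_of_le (by omega)]
    simp
  rw [hd]
  simp [List.getD]

theorem nextD_merge {L R : PatSeq k} {q} (hL : ∀ q ∈ L, ((0 : Fin (k+1)), true) ∉ q)
    (hq : ((0 : Fin (k+1)), true) ∉ q) (u : DVal k) :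
    nextD (L ++ q :: {((0 : Fin (k+1)), true)} :: R) u =
      fun j => if j = 0 then (if L = [] then u 0 + 1 else u 0)
        else (if (j, true) ∈ q then u j + 1 else u j) := by
  have e : L ++ q :: {((0 : Fin (k+1)), true)} :: R =
      (L ++ [q]) ++ {((0 : Fin (k+1)), true)} :: R := by simp
  have hL' : ∀ q' ∈ L ++ [q], ((0 : Fin (k+1)), true) ∉ q' := by
    simp only [List.mem_append, List.mem_singleton]
    rintro q' (h | rfl)
    · exact hL _ h
    · exact hq
  have h1 := now_getD (R := R) hL' (Finset.mem_singleton_self ((0 : Fin (k+1)), true))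
  have h2 := nowIdx_eq (R := R) hL' (Finset.mem_singleton_self ((0 : Fin (k+1)), true))
  rw [e]
  unfold nextD
  simp only [h1, if_true]
  rw [h2]
  simp [List.getD, List.take_append, List.drop_append]

theorem next_split0 {R : PatSeq k} {p} (hp : ((0 : Fin (k+1)), true) ∈ p)
    (hp' : p ≠ {((0 : Fin (k+1)), true)}) :
    NextPat (p :: R) = (p \ {((0 : Fin (k+1)), true)}) :: (R ++ [{((0 : Fin (k+1)), true)}]) := by
  have h1 := now_getD (L := []) (R := R) (by simp) hp
  have h2 := nowIdx_eq (L := []) (R := R) (by simp) hp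
  rw [List.nil_append] at h1 h2
  unfold NextPat
  simp only [h1, if_neg hp']
  rw [h2]
  simp

theorem next_split {L R : PatSeq k} {p} (hL : ∀ q ∈ L, ((0 : Fin (k+1)), true) ∉ q)
    (hLn : L ≠ []) (hp : ((0 : Fin (k+1)), true) ∈ p)
    (hp' : p ≠ {((0 : Fin (k+1)), true)}) :
    NextPat (L ++ p :: R) =
      L ++ {((0 : Fin (k+1)), true)} :: (p \ {((0 : Fin (k+1)), true)}) :: R := by
  have h1 := now_getD (R := R) hL hp
  have h2 := nowIdx_eq (R := R) hL hp
  unfold NextPat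
  simp only [h1, if_neg hp']
  rw [h2]
  simp [hLn, List.take_append, List.drop_append]

theorem nextD_split {L R : PatSeq k} {p} (hL : ∀ q ∈ L, ((0 : Fin (k+1)), true) ∉ q)
    (hp : ((0 : Fin (k+1)), true) ∈ p)
    (hp' : p ≠ {((0 : Fin (k+1)), true)}) (u : DVal k) :
    nextD (L ++ p :: R) u = u := by
  have h1 := now_getD (R := R) hL hp
  unfold nextD
  simp only [h1, if_neg hp']

theorem isMerge_iff {L R : PatSeq k} {p} (hL : ∀ q ∈ L, ((0 : Fin (k+1)), true) ∉ q)
    (hp : ((0 : Fin (k+1)), true) ∈ p) :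
    IsMergePat (L ++ p :: R) ↔ p = {((0 : Fin (k+1)), true)} := by
  unfold IsMergePat
  rw [now_getD hL hp]

theorem reset_eq {L R : PatSeq k} {p} (r : Finset (Fin (k+1)))
    (hL : ∀ q ∈ L, ((0 : Fin (k+1)), true) ∉ q)
    (hp : ((0 : Fin (k+1)), true) ∈ p) :
    ResetPat r (L ++ p :: R) =
      (L.map (· \ r.image (fun j => (j, true))) ++ (p ∪ r.image (fun j => (j, true))) ::
        R.map (· \ r.image (fun j => (j, true)))).filter (fun p => decide (p ≠ ∅)) := by
  unfold ResetPat
  rw [nowIdx_eq hL hp]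
  dsimp only
  congr 1
  rw [List.mapIdx_append, List.mapIdx_cons]
  congr 1
  · apply List.ext_getElem (by simp)
    intro i h1 h2
    simp at h1
    simp [h1.ne]
  · congr 1
    · simp
    · apply List.ext_getElem (by simp)
      intro i h1 h2
      have : i + 1 + L.length ≠ L.length := by omega
      simp [this]

/-! Good manipulations -/

theorem Good.decomp {f : Fin (k+1) × Bool → ℝ} {η : PatSeq k} (h : Good f η) (z) :
    ∃ L p R, η = L ++ p :: R ∧ z ∈ p ∧ (∀ q ∈ L, z ∉ q) ∧ (∀ q ∈ R, z ∉ q) := by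
  obtain ⟨p, hp, hz⟩ := h.2.1 z
  obtain ⟨L, R, rfl⟩ := List.append_of_mem hp
  refine ⟨L, p, R, rfl, hz, ?_, ?_⟩
  · intro q hq hzq
    have := (List.pairwise_append.1 h.2.2.1).2.2 q hq p (by simp) z hzq z hz
    exact lt_irrefl _ this
  · intro q hq hzq
    have := (List.pairwise_cons.1 (List.pairwise_append.1 h.2.2.1).2.1).1 q hq z hz z hzq
    exact lt_irrefl _ this

theorem Good.mk' {f : Fin (k+1) × Bool → ℝ} {L R : PatSeq k} {p} :
    Good f (L ++ p :: R) ↔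
      ((∀ q ∈ L, q.Nonempty) ∧ p.Nonempty ∧ (∀ q ∈ R, q.Nonempty)) ∧
      (∀ x, (∃ q ∈ L, x ∈ q) ∨ x ∈ p ∨ (∃ q ∈ R, x ∈ q)) ∧
      (L.Pairwise (fun p q => ∀ x ∈ p, ∀ y ∈ q, f x < f y) ∧
        R.Pairwise (fun p q => ∀ x ∈ p, ∀ y ∈ q, f x < f y) ∧
        (∀ q ∈ R, ∀ x ∈ p, ∀ y ∈ q, f x < f y) ∧
        (∀ q ∈ L, ∀ x ∈ q, ∀ y ∈ p, f x < f y) ∧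
        (∀ q ∈ L, ∀ q' ∈ R, ∀ x ∈ q, ∀ y ∈ q', f x < f y)) ∧
      ((∀ q ∈ L, ∀ x ∈ q, ∀ y ∈ q, f x = f y) ∧ (∀ x ∈ p, ∀ y ∈ p, f x = f y) ∧
        (∀ q ∈ R, ∀ x ∈ q, ∀ y ∈ q, f x = f y)) := by
  unfold Good
  simp only [List.mem_append, List.mem_cons, List.pairwise_append, List.pairwise_cons,
    or_imp, forall_and, forall_eq, or_and_right, exists_or, exists_eq_left]
  tauto

variable {f g : Fin (k+1) × Bool → ℝ} {z : Fin (k+1) × Bool}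

theorem pairwise_congr {L : PatSeq k} (hz : ∀ q ∈ L, z ∉ q) (hfg : ∀ x, x ≠ z → g x = f x)
    (h : L.Pairwise (fun p q => ∀ x ∈ p, ∀ y ∈ q, f x < f y)) :
    L.Pairwise (fun p q => ∀ x ∈ p, ∀ y ∈ q, g x < g y) := by
  refine h.imp_of_mem ?_
  intro p q hp hq hpq x hx y hy
  rw [hfg x (fun e => hz p hp (e ▸ hx)), hfg y (fun e => hz q hq (e ▸ hy))]
  exact hpq x hx y hy

theorem good_same {L R : PatSeq k} (hfg : ∀ x, x ≠ z → g x = f x)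
    (hL : ∀ q ∈ L, z ∉ q) (hR : ∀ q ∈ R, z ∉ q)
    (h : Good f (L ++ {z} :: R)) (h1 : ∀ q ∈ L, ∀ x ∈ q, f x < g z) (h2 : g z ≤ f z) :
    Good g (L ++ {z} :: R) := by
  rw [Good.mk'] at h ⊢
  obtain ⟨hne, hcov, ⟨hp1, hp2, hp3, hp4, hp5⟩, he1, he2, he3⟩ := h
  refine ⟨hne, hcov, ⟨pairwise_congr hL hfg hp1, pairwise_congr hR hfg hp2, ?_, ?_, ?_⟩,
    ?_, ?_, ?_⟩ <;> grind

theorem good_merge {L R : PatSeq k} {q} (hfg : ∀ x, x ≠ z → g x = f x)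
    (hL : ∀ q ∈ L, z ∉ q) (hq : z ∉ q) (hR : ∀ q ∈ R, z ∉ q)
    (h : Good f (L ++ q :: {z} :: R)) (h1 : ∀ x ∈ q, g z = f x) :
    Good g (L ++ (q ∪ {z}) :: R) := by
  have h' : Good f ((L ++ [q]) ++ {z} :: R) := by simpa using h
  rw [Good.mk'] at h h' ⊢
  obtain ⟨hne, hcov, ⟨hp1, hp2, hp3, hp4, hp5⟩, he1, he2, he3⟩ := h
  obtain ⟨hne', hcov', ⟨hp1', hp2', hp3', hp4', hp5'⟩, he1', he2', he3'⟩ := h'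
  refine ⟨⟨hne.1, by simp, hne'.2.2⟩, ?_,
    ⟨pairwise_congr hL hfg hp1, pairwise_congr hR hfg hp2', ?_, ?_, ?_⟩,
    ?_, ?_, ?_⟩ <;> simp only [List.mem_append, List.mem_cons, List.mem_singleton, Finset.mem_union, Finset.mem_singleton, List.not_mem_nil] at * <;> grind

theorem good_split0 {R : PatSeq k} {p} (hfg : ∀ x, x ≠ z → g x = f x)
    (hp : z ∈ p) (hp' : p ≠ {z}) (hR : ∀ q ∈ R, z ∉ q)
    (h : Good f (p :: R)) (h1 : ∀ x, x ≠ z → f x < g z) :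
    Good g ((p \ {z}) :: (R ++ [{z}])) := by
  have h' : Good f ([] ++ p :: R) := by simpa using h
  have hne0 : (p \ {z}).Nonempty := by
    rw [Finset.sdiff_nonempty]
    intro hs
    exact hp' (Finset.Subset.antisymm hs (by simpa using hp))
  rw [← List.cons_append]
  rw [Good.mk'] at h' ⊢
  obtain ⟨hne, hcov, ⟨hp1, hp2, hp3, hp4, hp5⟩, he1, he2, he3⟩ := h'
  have hpp : (((p \ {z}) :: R) : PatSeq k).Pairwise (fun p q => ∀ x ∈ p, ∀ y ∈ q, f x < f y) := by
    rw [List.pairwise_cons]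
    refine ⟨?_, hp2⟩
    intro q hq x hx y hy
    exact hp3 q hq x (Finset.mem_sdiff.1 hx).1 y hy
  have hz' : ∀ q ∈ ((p \ {z}) :: R), z ∉ q := by
    simp only [List.mem_cons]
    rintro q (rfl | hq)
    · simp
    · exact hR q hq
  refine ⟨⟨?_, by simp, by simp⟩, ?_,
    ⟨pairwise_congr hz' hfg hpp, by simp, by simp, ?_, by simp⟩,
    ?_, by simp, by simp⟩ <;> simp only [List.mem_append, List.mem_cons, List.mem_singleton, Finset.mem_union, Finset.mem_singleton, List.not_mem_nil, Finset.mem_sdiff] at * <;> grind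

theorem good_split {L R : PatSeq k} {p} (hfg : ∀ x, x ≠ z → g x = f x)
    (hL : ∀ q ∈ L, z ∉ q) (hp : z ∈ p) (hp' : p ≠ {z}) (hR : ∀ q ∈ R, z ∉ q)
    (h : Good f (L ++ p :: R)) (h1 : ∀ q ∈ L, ∀ x ∈ q, f x < g z) (h2 : g z < f z) :
    Good g (L ++ {z} :: (p \ {z}) :: R) := by
  have hne0 : (p \ {z}).Nonempty := by
    rw [Finset.sdiff_nonempty]
    intro hs
    exact hp' (Finset.Subset.antisymm hs (by simpa using hp))
  rw [Good.mk'] at h ⊢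
  obtain ⟨hne, hcov, ⟨hp1, hp2, hp3, hp4, hp5⟩, he1, he2, he3⟩ := h
  have hpp : (((p \ {z}) :: R) : PatSeq k).Pairwise (fun p q => ∀ x ∈ p, ∀ y ∈ q, f x < f y) := by
    rw [List.pairwise_cons]
    refine ⟨?_, hp2⟩
    intro q hq x hx y hy
    exact hp3 q hq x (Finset.mem_sdiff.1 hx).1 y hy
  have hz' : ∀ q ∈ ((p \ {z}) :: R), z ∉ q := by
    simp only [List.mem_cons]
    rintro q (rfl | hq)
    · simp
    · exact hR q hq
  have hcov2 : ∀ x, (∃ q ∈ L, x ∈ q) ∨ x ∈ ({z} : Finset _) ∨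
      (∃ q ∈ ((p \ {z}) :: R), x ∈ q) := by
    intro x
    by_cases hxz : x = z
    · right; left; simp [hxz]
    · rcases hcov x with h | h | ⟨q, hq, h⟩
      · exact Or.inl h
      · exact Or.inr (Or.inr ⟨p \ {z}, by simp, by simp [h, hxz]⟩)
      · exact Or.inr (Or.inr ⟨q, by simp [hq], h⟩)
  refine ⟨⟨hne.1, by simp, ?_⟩, hcov2,
    ⟨pairwise_congr hL hfg hp1, pairwise_congr hz' hfg hpp, ?_, ?_, ?_⟩,
    ?_, by simp, ?_⟩ <;> simp only [List.mem_append, List.mem_cons, List.mem_singleton, Finset.mem_union, Finset.mem_singleton, List.not_mem_nil, Finset.mem_sdiff] at * <;> grind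

theorem good_reset {L R : PatSeq k} {p r1} (hfg : ∀ x, g x = if x ∈ r1 then f z else f x)
    (hp : z ∈ p) (h : Good f (L ++ p :: R)) :
    Good g ((L.map (· \ r1) ++ (p ∪ r1) :: R.map (· \ r1)).filter
      (fun p => decide (p ≠ ∅))) := by
  rw [Good.mk'] at h
  obtain ⟨hne, hcov, ⟨hp1, hp2, hp3, hp4, hp5⟩, he1, he2, he3⟩ := h
  have key : ∀ M : PatSeq k, M.Pairwise (fun p q => ∀ x ∈ p, ∀ y ∈ q, f x < f y) →
      (M.map (· \ r1)).Pairwise (fun p q => ∀ x ∈ p, ∀ y ∈ q, g x < g y) := by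
    intro M hM
    rw [List.pairwise_map]
    refine hM.imp ?_
    intro a b hab x hx y hy
    simp only [Finset.mem_sdiff] at hx hy
    rw [hfg, hfg, if_neg hx.2, if_neg hy.2]
    exact hab x hx.1 y hy.1
  refine ⟨?_, ?_, ?_, ?_⟩
  · intro q hq
    rw [List.mem_filter] at hq
    rw [Finset.nonempty_iff_ne_empty]
    exact of_decide_eq_true hq.2
  · intro x
    suffices ∃ q ∈ (L.map (· \ r1) ++ (p ∪ r1) :: R.map (· \ r1)), x ∈ q by
      obtain ⟨q, hq, hx⟩ := this
      refine ⟨q, ?_, hx⟩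
      rw [List.mem_filter]
      exact ⟨hq, decide_eq_true (Finset.ne_empty_of_mem hx)⟩
    by_cases hx : x ∈ r1
    · exact ⟨p ∪ r1, by simp, by simp [hx]⟩
    · rcases hcov x with ⟨q, hq, h⟩ | h | ⟨q, hq, h⟩
      · refine ⟨q \ r1, ?_, by simp [h, hx]⟩
        rw [List.mem_append]; left; exact List.mem_map_of_mem hq
      · exact ⟨p ∪ r1, by simp, by simp [h]⟩
      · refine ⟨q \ r1, ?_, by simp [h, hx]⟩
        rw [List.mem_append]; right; exact List.mem_cons_of_mem _ (List.mem_map_of_mem hq)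
  · apply List.Pairwise.filter
    rw [List.pairwise_append, List.pairwise_cons]
    refine ⟨key L hp1, ⟨?_, key R hp2⟩, ?_⟩ <;>
    simp only [List.mem_cons, List.mem_map] <;> grind
  · intro q hq
    have hq := (List.mem_filter.1 hq).1
    simp only [List.mem_append, List.mem_cons, List.mem_map] at hq
    grind
/-! time progress -/

theorem shift_isVal {v : Val k} (hv : IsVal v) {δ : ℝ} (hδ : 0 ≤ δ) : IsVal (shift v δ) :=
  fun i => add_nonneg (hv i) hδ

theorem reset_isVal {v : Val k} (hv : IsVal v) (r : Finset (Fin (k+1))) :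
    IsVal (resetVal r v) := by
  intro i; unfold resetVal; split_ifs
  · exact le_rfl
  · exact hv i

theorem shift_zero (v : Val k) : shift v 0 = v := by funext i; simp [shift]

theorem shift_shift (v : Val k) (a b : ℝ) : shift (shift v a) b = shift v (a + b) := by
  funext i; simp [shift, add_assoc]

theorem int_same {v : Val k} {δ : ℝ} {j} (hδ : 0 ≤ δ) (h : Int.fract (v j) + δ < 1) :
    intPart (shift v δ) j = intPart v j := by
  unfold intPart
  congr 1
  rw [Int.floor_eq_iff]
  have := Int.floor_add_fract (v j)
  have := Int.fract_nonneg (v j)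
  simp only [shift]
  constructor <;> linarith

theorem int_succ {v : Val k} (hv : IsVal v) {δ : ℝ} {j} (h : Int.fract (v j) + δ = 1) :
    intPart (shift v δ) j = intPart v j + 1 := by
  have h1 : ⌊shift v δ j⌋ = ⌊v j⌋ + 1 := by
    rw [Int.floor_eq_iff]
    have := Int.floor_add_fract (v j)
    simp only [shift]
    push_cast
    constructor <;> linarith
  have h2 : 0 ≤ ⌊v j⌋ := Int.floor_nonneg.2 (hv j)
  unfold intPart
  rw [h1]
  omega

theorem gap_merge {v₀ v : Val k} (h0 : v₀ 0 = 0) (hv : IsVal v) {η : PatSeq k}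
    (h : Good (FF v₀ v) η) (hm : IsMergePat η) :
    ∃ d, 0 < d ∧ (∀ δ, 0 ≤ δ → δ < d → Good (FF v₀ (shift v δ)) η ∧
        intPart (shift v δ) = intPart v) ∧
      Good (FF v₀ (shift v d)) (NextPat η) ∧ intPart (shift v d) = nextD η (intPart v) ∧
      ∃ y, y ≠ ((0 : Fin (k+1)), true) ∧
        FF v₀ (shift v d) y = FF v₀ (shift v d) (0, true) := by
  obtain ⟨L, p, R, rfl, hz, hL, hR⟩ := h.decomp (0, true)
  rw [isMerge_iff hL hz] at hm
  subst hm
  have hG := h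
  have hf0 := FF_zf h0 v
  have hnn := FF_nonneg v₀ v
  have hlt := FF_lt_one v₀ v
  have hmk := Good.mk'.1 h
  obtain ⟨hne, hcov, ⟨hp1, hp2, hp3, hp4, hp5⟩, he1, he2, he3⟩ := hmk
  have hL0 : L ≠ [] := by
    rintro rfl
    rcases hcov (0, false) with ⟨q, hq, -⟩ | hq | ⟨q, hq, hx⟩
    · simp at hq
    · simp at hq
    · have := hp3 q hq _ hz _ hx
      have := hnn (0, true)
      linarith
  obtain ⟨L', q, rfl⟩ := List.eq_nil_or_concat L |>.resolve_left hL0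
  rw [List.concat_eq_append] at *
  obtain ⟨y, hy⟩ := hne.1 q (by simp)
  have hzq : ((0 : Fin (k+1)), true) ∉ q := hL q (by simp)
  have hyz : y ≠ ((0 : Fin (k+1)), true) := fun e => hzq (e ▸ hy)
  have hL' : ∀ q ∈ L', ((0 : Fin (k+1)), true) ∉ q := fun q' h' => hL q' (by simp [h'])
  set f := FF v₀ v with hfdef
  have hqa : ∀ x ∈ q, f x = f y := fun x hx => he1 q (by simp) x hx y hy
  have hLq : ∀ q' ∈ L', ∀ x ∈ q', f x < f y := by
    intro q' hq' x hx
    exact (List.pairwise_append.1 hp1).2.2 q' hq' q (by simp) x hx y hy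
  have hyc : f y < f (0, true) := hp4 q (by simp) y hy _ hz
  have hA : ∀ x, x ≠ ((0 : Fin (k+1)), true) →
      (f x < f y ∧ x ∉ q ∨ f x = f y ∧ x ∈ q ∨ f (0, true) < f x ∧ x ∉ q) := by
    intro x hxz
    rcases hcov x with ⟨q', hq', hx⟩ | hx | ⟨q', hq', hx⟩
    · rw [List.mem_append, List.mem_singleton] at hq'
      rcases hq' with hq' | rfl
      · have := hLq q' hq' x hx
        exact Or.inl ⟨this, fun hxq => by have := hqa x hxq; linarith⟩
      · exact Or.inr (Or.inl ⟨hqa x hx, hx⟩)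
    · exact absurd (Finset.mem_singleton.1 hx) hxz
    · have := hp3 q' hq' _ hz x hx
      exact Or.inr (Or.inr ⟨this, fun hxq => by have := hqa x hxq; linarith⟩)
  have hgz : ∀ δ, 0 ≤ δ → δ ≤ f (0, true) - f y →
      FF v₀ (shift v δ) (0, true) = f (0, true) - δ := by
    intro δ h1 h2
    rw [FF_shift_z]
    have := hnn y
    have := hlt (0, true)
    exact Int.fract_eq_self.2 ⟨by linarith, by linarith⟩
  have hle : ∀ q' ∈ L' ++ [q], ∀ x ∈ q', f x ≤ f y := by
    intro q' hq' x hx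
    rw [List.mem_append, List.mem_singleton] at hq'
    rcases hq' with hq' | rfl
    · exact (hLq q' hq' x hx).le
    · exact (hqa x hx).le
  refine ⟨f (0, true) - f y, by linarith, ?_, ?_, ?_, y, hyz, ?_⟩
  · intro δ h1 h2
    refine ⟨good_same (FF_shift v₀ v δ) hL hR hG ?_ ?_, ?_⟩
    · intro q' hq' x hx
      have := hle q' hq' x hx
      rw [hgz δ h1 h2.le]; linarith
    · rw [hgz δ h1 h2.le]; linarith
    · funext j
      apply int_same h1
      by_cases hj : j = 0
      · subst hj
        have := hnn y
        rcases fract_f0 v₀ v with ⟨h3, h4⟩ | ⟨h3, h4⟩ <;> rw [h4] <;> linarith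
      · have hA := hA (j, true) (by simp [hj])
        have := hnn y
        have := hlt (j, true)
        rcases fract_fj v₀ v hj with ⟨h3, h4⟩ | ⟨h3, h4⟩ <;> rw [h4] <;>
          rcases hA with ⟨hA, -⟩ | ⟨hA, -⟩ | ⟨hA, -⟩ <;> linarith
  · rw [List.append_assoc, List.singleton_append, next_merge hL' hzq]
    refine good_merge (FF_shift v₀ v _) hL' hzq hR (by simpa using hG) ?_
    intro x hx
    rw [hgz _ (by linarith) le_rfl]
    have := hqa x hx
    linarith
  · rw [List.append_assoc, List.singleton_append, nextD_merge hL' hzq]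
    funext j
    by_cases hj : j = 0
    · subst hj
      have h1 := hnn y
      simp only [if_true]
      by_cases hLe : L' = []
      · rw [if_pos hLe]
        have hy0 : f y = 0 := by
          rcases hcov (0, false) with ⟨q', hq', hx⟩ | hx | ⟨q', hq', hx⟩
          · rw [hLe, List.nil_append, List.mem_singleton] at hq'
            subst hq'
            rw [← hqa _ hx, hf0]
          · simp at hx
          · have := hp3 q' hq' _ hz _ hx
            linarith [hnn (0, true)]
        apply int_succ hv
        rcases fract_f0 v₀ v with ⟨h3, h4⟩ | ⟨h3, h4⟩
        · linarith
        · rw [h4]; linarith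
      · rw [if_neg hLe]
        obtain ⟨q', hq'⟩ := List.exists_mem_of_ne_nil _ hLe
        obtain ⟨x, hx⟩ := hne.1 q' (by simp [hq'])
        have := hLq q' hq' x hx
        have := hnn x
        apply int_same (by linarith)
        rcases fract_f0 v₀ v with ⟨h3, h4⟩ | ⟨h3, h4⟩ <;> rw [h4] <;> linarith
    · simp only [if_neg hj]
      have hA := hA (j, true) (by simp [hj])
      have := hnn y
      have := hlt (j, true)
      rcases hA with ⟨hA, hA'⟩ | ⟨hA, hA'⟩ | ⟨hA, hA'⟩
      · rw [if_neg hA']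
        apply int_same (by linarith)
        rcases fract_fj v₀ v hj with ⟨h3, h4⟩ | ⟨h3, h4⟩ <;> rw [h4] <;> linarith
      · rw [if_pos hA']
        apply int_succ hv
        rcases fract_fj v₀ v hj with ⟨h3, h4⟩ | ⟨h3, h4⟩ <;> rw [h4] <;> linarith
      · rw [if_neg hA']
        apply int_same (by linarith)
        rcases fract_fj v₀ v hj with ⟨h3, h4⟩ | ⟨h3, h4⟩ <;> rw [h4] <;> linarith
  · rw [hgz _ (by linarith) le_rfl, FF_shift _ _ _ _ hyz, ← hfdef]
    ring

theorem gap_split {v₀ v : Val k} (h0 : v₀ 0 = 0) {η : PatSeq k}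
    (h : Good (FF v₀ v) η) (hm : ¬ IsMergePat η) :
    ∃ d, 0 < d ∧ IsMergePat (NextPat η) ∧ ∀ δ, 0 < δ → δ < d →
        Good (FF v₀ (shift v δ)) (NextPat η) ∧
        intPart (shift v δ) = nextD η (intPart v) := by
  obtain ⟨L, p, R, rfl, hz, hL, hR⟩ := h.decomp (0, true)
  rw [isMerge_iff hL hz] at hm
  have hG := h
  have hf0 := FF_zf h0 v
  have hnn := FF_nonneg v₀ v
  have hlt := FF_lt_one v₀ v
  have hmk := Good.mk'.1 h
  obtain ⟨hne, hcov, ⟨hp1, hp2, hp3, hp4, hp5⟩, he1, he2, he3⟩ := hmk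
  rw [nextD_split hL hz hm]
  rcases List.eq_nil_or_concat L with rfl | ⟨L', q, rfl⟩
  · rw [List.nil_append] at *
    have hz0 : FF v₀ v (0, true) = 0 := by
      rcases hcov (0, false) with ⟨q', hq', hx⟩ | hx | ⟨q', hq', hx⟩
      · simp at hq'
      · rw [he2 _ hz _ hx, hf0]
      · have := hp3 q' hq' _ hz _ hx
        linarith [hnn (0, true)]
    obtain ⟨y, hy, hmax⟩ := Finset.exists_max_image
      (Finset.univ.erase ((0 : Fin (k+1)), true)) (FF v₀ v) ⟨(0, false), by simp⟩
    have hmax' : ∀ x, x ≠ ((0 : Fin (k+1)), true) → FF v₀ v x ≤ FF v₀ v y :=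
      fun x hx => hmax x (by simp [hx])
    have hy1 := hlt y
    have hy0 := hnn y
    rw [next_split0 hz hm]
    refine ⟨1 - FF v₀ v y, by linarith, ?_, ?_⟩
    · rw [← List.cons_append, isMerge_iff _ (by simp)]
      simp only [List.mem_cons]
      rintro q (rfl | hq)
      · simp
      · exact hR q hq
    · intro δ h1 h2
      have hgz : FF v₀ (shift v δ) (0, true) = 1 - δ := by
        rw [FF_shift_z, hz0, fract_sub_of_lt le_rfl (by linarith) h1]; ring
      refine ⟨good_split0 (FF_shift v₀ v δ) hz hm hR hG ?_, ?_⟩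
      · intro x hx
        have := hmax' x hx
        rw [hgz]; linarith
      · funext j
        apply int_same h1.le
        by_cases hj : j = 0
        · subst hj
          rcases fract_f0 v₀ v with ⟨h3, h4⟩ | ⟨h3, h4⟩ <;> rw [h4] <;> linarith
        · have := hmax' (j, true) (by simp [hj])
          have := hnn (j, true)
          rcases fract_fj v₀ v hj with ⟨h3, h4⟩ | ⟨h3, h4⟩ <;> rw [h4] <;> linarith
  · rw [List.concat_eq_append] at *
    obtain ⟨y, hy⟩ := hne.1 q (by simp)
    have hle : ∀ q' ∈ L' ++ [q], ∀ x ∈ q', FF v₀ v x ≤ FF v₀ v y := by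
      intro q' hq' x hx
      have hq2 := hq'
      rw [List.mem_append, List.mem_singleton] at hq2
      rcases hq2 with hq2 | rfl
      · exact ((List.pairwise_append.1 hp1).2.2 q' hq2 q (by simp) x hx y hy).le
      · exact (he1 q' hq' x hx y hy).le
    have hyc : FF v₀ v y < FF v₀ v (0, true) := hp4 q (by simp) y hy _ hz
    have hA : ∀ x, FF v₀ v x ≤ FF v₀ v y ∨ FF v₀ v (0, true) ≤ FF v₀ v x := by
      intro x
      rcases hcov x with ⟨q', hq', hx⟩ | hx | ⟨q', hq', hx⟩
      · exact Or.inl (hle q' hq' x hx)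
      · exact Or.inr (he2 _ hz _ hx).le
      · exact Or.inr (hp3 q' hq' _ hz x hx).le
    have hy0 := hnn y
    have hc1 := hlt (0, true)
    rw [next_split hL (by simp) hz hm]
    refine ⟨FF v₀ v (0, true) - FF v₀ v y, by linarith, ?_, ?_⟩
    · rw [isMerge_iff hL (by simp)]
    · intro δ h1 h2
      have hgz : FF v₀ (shift v δ) (0, true) = FF v₀ v (0, true) - δ := by
        rw [FF_shift_z]
        exact Int.fract_eq_self.2 ⟨by linarith, by linarith⟩
      refine ⟨good_split (FF_shift v₀ v δ) hL hz hm hR hG ?_ ?_, ?_⟩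
      · intro q' hq' x hx
        have := hle q' hq' x hx
        rw [hgz]; linarith
      · rw [hgz]; linarith
      · funext j
        apply int_same h1.le
        by_cases hj : j = 0
        · subst hj
          rcases fract_f0 v₀ v with ⟨h3, h4⟩ | ⟨h3, h4⟩ <;> rw [h4] <;> linarith
        · have := hlt (j, true)
          rcases fract_fj v₀ v hj with ⟨h3, h4⟩ | ⟨h3, h4⟩ <;> rw [h4] <;>
            rcases hA (j, true) with hA | hA <;> linarith

theorem good_resetPat {v₀ v : Val k} {η : PatSeq k} (r : Finset (Fin (k+1)))
    (hr : (0 : Fin (k+1)) ∉ r) (h : Good (FF v₀ v) η) :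
    Good (FF v₀ (resetVal r v)) (ResetPat r η) := by
  obtain ⟨L, p, R, rfl, hz, hL, hR⟩ := h.decomp (0, true)
  rw [reset_eq r hL hz]
  exact good_reset (FF_reset v₀ v r hr) hz h

theorem int_reset (r : Finset (Fin (k+1))) (v : Val k) :
    intPart (resetVal r v) = resetD r (intPart v) := by
  funext j
  unfold intPart resetVal resetD
  by_cases hj : j ∈ r <;> simp [hj]

noncomputable def MM (v₀ v : Val k) : ℤ :=
  ∑ x ∈ Finset.univ.erase ((0 : Fin (k+1)), true), ⌊FF v₀ v x + v 0⌋

theorem MM_mono (v₀ v : Val k) {δ : ℝ} (hδ : 0 ≤ δ) : MM v₀ v ≤ MM v₀ (shift v δ) := by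
  apply Finset.sum_le_sum
  intro x hx
  rw [FF_shift _ _ _ _ (Finset.ne_of_mem_erase hx)]
  apply Int.floor_le_floor
  simp only [shift]; linarith

theorem MM_strict (v₀ v : Val k) {δ : ℝ} (hδ : 0 < δ) {y}
    (hy : y ≠ ((0 : Fin (k+1)), true))
    (he : FF v₀ (shift v δ) y = FF v₀ (shift v δ) (0, true)) :
    MM v₀ v < MM v₀ (shift v δ) := by
  apply Finset.sum_lt_sum
  · intro x hx
    rw [FF_shift _ _ _ _ (Finset.ne_of_mem_erase hx)]
    apply Int.floor_le_floor
    simp only [shift]; linarith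
  · refine ⟨y, by simp [hy], ?_⟩
    rw [he, FF_zt]
    have h1 : Int.fract (-(shift v δ 0)) + shift v δ 0 = ((-⌊-(shift v δ 0)⌋ : ℤ) : ℝ) := by
      rw [Int.fract]; push_cast; ring
    rw [h1, Int.floor_intCast, Int.floor_lt, ← h1, ← FF_zt v₀, ← he, FF_shift _ _ _ _ hy]
    simp only [shift]; linarith

section sim
variable {S Γ : Type} (A : PTA k S Γ)

theorem g_progress {v₀ v v' : Val k} {η : PatSeq k} {s : S} {w : List Γ}
    (hv : IsVal v) (hv' : IsVal v')
    (h : Good (FF v₀ v) η) (h' : Good (FF v₀ v') (NextPat η))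
    (hi : intPart v' = nextD η (intPart v)) (h1 : (A.Inv s).sat v) (h2 : (A.Inv s).sat v') :
    GStep A (s, η, intPart v, w) (s, NextPat η, intPart v', w) := by
  left
  refine ⟨rfl, rfl, ?_, (sat_iff h hv _).1 h1, (sat_iff h' hv' _).1 h2⟩
  simp [nextPair, hi]

theorem progress {v₀ : Val k} (h0 : v₀ 0 = 0) (s : S) (w : List Γ) (n : ℕ) :
    ∀ (v : Val k) (η : PatSeq k) (δ : ℝ), IsVal v → Good (FF v₀ v) η → 0 < δ →
      (∀ δ', 0 ≤ δ' → δ' ≤ δ → (A.Inv s).sat (shift v δ')) →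
      MM v₀ (shift v δ) - MM v₀ v ≤ n →
      ∃ η', Good (FF v₀ (shift v δ)) η' ∧
        GReach A (s, η, intPart v, w) (s, η', intPart (shift v δ), w) := by
  induction n using Nat.strong_induction_on with
  | _ n ih =>
  have hmerge : ∀ (v : Val k) (η : PatSeq k) (δ : ℝ), IsVal v → Good (FF v₀ v) η → 0 < δ →
      (∀ δ', 0 ≤ δ' → δ' ≤ δ → (A.Inv s).sat (shift v δ')) →
      MM v₀ (shift v δ) - MM v₀ v ≤ n → IsMergePat η →
      ∃ η', Good (FF v₀ (shift v δ)) η' ∧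
        GReach A (s, η, intPart v, w) (s, η', intPart (shift v δ), w) := by
    intro v η δ hv h hδ hinv hM hm
    have hinv0 : (A.Inv s).sat v := by simpa [shift_zero] using hinv 0 le_rfl hδ.le
    obtain ⟨d, hd, hb, hg, hi, y, hy, hye⟩ := gap_merge h0 hv h hm
    rcases lt_or_ge δ d with hlt | hge
    · obtain ⟨hb1, hb2⟩ := hb δ hδ.le hlt
      refine ⟨η, hb1, Relation.TransGen.single ?_⟩
      rw [hb2]
      right; left
      exact ⟨rfl, hm, (sat_iff h hv _).1 hinv0⟩
    · have hst : GStep A (s, η, intPart v, w) (s, NextPat η, intPart (shift v d), w) :=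
        g_progress A hv (shift_isVal hv hd.le) h hg hi hinv0 (hinv d hd.le hge)
      rcases hge.eq_or_lt with rfl | hlt
      · exact ⟨NextPat η, hg, Relation.TransGen.single hst⟩
      · have e : shift (shift v d) (δ - d) = shift v δ := by rw [shift_shift]; congr 1; ring
        have h1 := MM_strict v₀ v hd hy hye
        have h2 := MM_mono v₀ (shift v d) (sub_nonneg.2 hlt.le)
        rw [e] at h2
        have hn : 0 < n := by omega
        obtain ⟨η', hη', hr⟩ := ih (n - 1) (by omega) (shift v d) (NextPat η) (δ - d)
          (shift_isVal hv hd.le) hg (sub_pos.2 hlt)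
          (fun δ' ha hb => by
            rw [shift_shift]; exact hinv _ (by linarith) (by linarith))
          (by rw [e]; omega)
        rw [e] at hη' hr
        exact ⟨η', hη', Relation.TransGen.head hst hr⟩
  intro v η δ hv h hδ hinv hM
  by_cases hm : IsMergePat η
  · exact hmerge v η δ hv h hδ hinv hM hm
  have hinv0 : (A.Inv s).sat v := by simpa [shift_zero] using hinv 0 le_rfl hδ.le
  obtain ⟨d, hd, hmN, hb⟩ := gap_split h0 h hm
  rcases lt_or_ge δ d with hlt | hge
  · obtain ⟨hb1, hb2⟩ := hb δ hδ hlt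
    exact ⟨NextPat η, hb1, Relation.TransGen.single
      (g_progress A hv (shift_isVal hv hδ.le) h hb1 hb2 hinv0 (hinv δ hδ.le le_rfl))⟩
  · obtain ⟨hb1, hb2⟩ := hb (d / 2) (by linarith) (by linarith)
    have hst : GStep A (s, η, intPart v, w) (s, NextPat η, intPart (shift v (d / 2)), w) :=
      g_progress A hv (shift_isVal hv (by linarith)) h hb1 hb2 hinv0
        (hinv _ (by linarith) (by linarith))
    have e : shift (shift v (d / 2)) (δ - d / 2) = shift v δ := by
      rw [shift_shift]; congr 1; ring
    have h1 := MM_mono v₀ v (δ := d / 2) (by linarith)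
    obtain ⟨η', hη', hr⟩ := hmerge (shift v (d / 2)) (NextPat η) (δ - d / 2)
      (shift_isVal hv (by linarith)) hb1 (by linarith)
      (fun δ' ha hb => by
        rw [shift_shift]; exact hinv _ (by linarith) (by linarith))
      (by rw [e]; omega) hmN
    rw [e] at hη' hr
    exact ⟨η', hη', Relation.TransGen.head hst hr⟩

theorem step_sim {v₀ : Val k} (h0 : v₀ 0 = 0) {s s' : S} {v v' : Val k} {w w' : List Γ}
    {η : PatSeq k} (hv : IsVal v) (h : Good (FF v₀ v) η)
    (hst : Step A (s, v, w) (s', v', w')) :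
    IsVal v' ∧ ∃ η', Good (FF v₀ v') η' ∧
      GReach A (s, η, intPart v, w) (s', η', intPart v', w') := by
  rcases hst with ⟨h1, h2, δ, hδ, h3, hinv⟩ | ⟨h1, h2, h3, h4, u, h5, h6⟩
  · dsimp only at h1 h2 h3 hinv
    subst h1 h2 h3
    refine ⟨shift_isVal hv hδ.le, ?_⟩
    exact progress A h0 s w (MM v₀ (shift v δ) - MM v₀ v).toNat v η δ hv h hδ hinv
      (Int.self_le_toNat _)
  · dsimp only at h1 h2 h3 h4 h5 h6
    subst h3
    have hv' := reset_isVal hv (A.Rr s s')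
    have hg := good_resetPat _ (A.hRr s s') h
    refine ⟨hv', ResetPat (A.Rr s s') η, hg, Relation.TransGen.single ?_⟩
    right; right
    refine ⟨?_, ?_, (sat_iff hg hv' _).1 h4, u, h5, h6⟩
    · simp [resetPair, int_reset]
    · exact ⟨(sat_iff h hv _).1 h2, (sat_iff h hv _).1 h1⟩

theorem gstep_sim {v₀ : Val k} (h0 : v₀ 0 = 0) {s s' : S} {v : Val k} {w w' : List Γ}
    {η η' : PatSeq k} {u' : DVal k} (hv : IsVal v) (h : Good (FF v₀ v) η)
    (hst : GStep A (s, η, intPart v, w) (s', η', u', w')) :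
    ∃ v', IsVal v' ∧ Good (FF v₀ v') η' ∧ intPart v' = u' ∧
      Step A (s, v, w) (s', v', w') := by
  rcases hst with ⟨h1, h2, h3, h4, h5⟩ | ⟨h1, h2, h3⟩ | ⟨h1, h2, h3, x, h4, h5⟩
  · dsimp only at h1 h2 h3 h4 h5
    subst h1 h2
    obtain ⟨rfl, rfl⟩ := Prod.mk.inj h3
    by_cases hm : IsMergePat η
    · obtain ⟨d, hd, hb, hg, hi, -⟩ := gap_merge h0 hv h hm
      have hvd := shift_isVal hv hd.le
      refine ⟨shift v d, hvd, hg, hi, Or.inl ⟨rfl, rfl, d, hd, rfl, ?_⟩⟩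
      intro δ' ha hb'
      dsimp only
      rcases hb'.eq_or_lt with rfl | hlt
      · rw [sat_iff hg hvd, hi]; exact h5
      · obtain ⟨hg', hi'⟩ := hb δ' ha hlt
        rw [sat_iff hg' (shift_isVal hv ha), hi']; exact h4
    · obtain ⟨d, hd, -, hb⟩ := gap_split h0 h hm
      obtain ⟨hg, hi⟩ := hb (d / 2) (by linarith) (by linarith)
      refine ⟨shift v (d / 2), shift_isVal hv (by linarith), hg, hi,
        Or.inl ⟨rfl, rfl, d / 2, by linarith, rfl, ?_⟩⟩
      intro δ' ha hb'
      dsimp only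
      rcases ha.eq_or_lt with rfl | hlt
      · rw [shift_zero, sat_iff h hv]; exact h4
      · obtain ⟨hg', hi'⟩ := hb δ' hlt (by linarith)
        rw [sat_iff hg' (shift_isVal hv ha), hi']; exact h5
  · dsimp only at h1 h2 h3
    cases h1
    obtain ⟨d, hd, hb, -⟩ := gap_merge h0 hv h h2
    obtain ⟨hg, hi⟩ := hb (d / 2) (by linarith) (by linarith)
    refine ⟨shift v (d / 2), shift_isVal hv (by linarith), hg, hi,
        Or.inl ⟨rfl, rfl, d / 2, by linarith, rfl, ?_⟩⟩
    intro δ' ha hb'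
    dsimp only at hb' ⊢
    obtain ⟨hg', hi'⟩ := hb δ' ha (by linarith)
    rw [sat_iff hg' (shift_isVal hv ha), hi']; exact h3
  · dsimp only at h1 h2 h3 h4 h5
    obtain ⟨rfl, rfl⟩ := Prod.mk.inj h1
    have hv' := reset_isVal hv (A.Rr s s')
    have hg := good_resetPat _ (A.hRr s s') h
    refine ⟨_, hv', hg, int_reset _ _, Or.inr ⟨?_, ?_, rfl, ?_, x, h4, h5⟩⟩
    · exact (sat_iff h hv _).2 h2.2
    · exact (sat_iff h hv _).2 h2.1
    · refine (sat_iff hg hv' _).2 ?_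
      rw [int_reset]; exact h3

theorem reach_sim {v₀ : Val k} (h0 : v₀ 0 = 0) {s : S} {v : Val k} {w : List Γ}
    {η : PatSeq k} (hv : IsVal v) (h : Good (FF v₀ v) η) {c : Config k S Γ}
    (hr : Reach A (s, v, w) c) :
    IsVal c.2.1 ∧ ∃ η', Good (FF v₀ c.2.1) η' ∧
      GReach A (s, η, intPart v, w) (c.1, η', intPart c.2.1, c.2.2) := by
  induction hr with
  | single hst => exact step_sim A h0 hv h hst
  | tail _ hst ih =>
    obtain ⟨hv', η', hη', hg⟩ := ih
    obtain ⟨hv2, η2, hη2, hg2⟩ := step_sim A h0 hv' hη' hst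
    exact ⟨hv2, η2, hη2, hg.trans hg2⟩

theorem greach_sim {v₀ : Val k} (h0 : v₀ 0 = 0) {s : S} {v : Val k} {w : List Γ}
    {η : PatSeq k} (hv : IsVal v) (h : Good (FF v₀ v) η) {c : GConfig k S Γ}
    (hr : GReach A (s, η, intPart v, w) c) :
    ∃ v', IsVal v' ∧ Good (FF v₀ v') c.2.1 ∧ intPart v' = c.2.2.1 ∧
      Reach A (s, v, w) (c.1, v', c.2.2.2) := by
  induction hr with
  | single hst =>
    obtain ⟨v', h1, h2, h3, h4⟩ := gstep_sim A h0 hv h hst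
    exact ⟨v', h1, h2, h3, Relation.TransGen.single h4⟩
  | @tail b c _ hst ih =>
    obtain ⟨v', h1, h2, h3, h4⟩ := ih
    obtain ⟨sb, ηb, ub, wb⟩ := b
    dsimp only at h2 h3 h4
    subst h3
    obtain ⟨v2, g1, g2, g3, g4⟩ := gstep_sim A h0 h1 h2 hst
    exact ⟨v2, g1, g2, g3, Relation.TransGen.tail h4 g4⟩

end sim
end Aux

/-- Lemma `Presburgersimulation`. Let `A` be a PTA with pattern graph
`G`. For any states `s₀, s₁`, any pattern `η` (with `η₀ = init(η)`, the pattern of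
`(v₀,v₀)` for any initialized pair `(v₀,v₁)` of pattern `η`), any stack words `w₀, w₁`,
and any discrete valuations `u₀, u₁` with `u₀(0) = 0`:
`(s₀,u₀,w₀) →*_{A,η} (s₁,u₁,w₁)` iff `(s₀,init(η),u₀,w₀) →*_G (s₁,η,u₁,w₁)`. -/
theorem pattern_graph_simulation (k : ℕ) (hk : 1 ≤ k) {S Γ : Type} [Fintype S] [Fintype Γ]
    (A : PTA k S Γ) (s₀ s₁ : S)
    (η η₀ : PatSeq k) (hη : IsPattern η)
    (hinit : ∃ va vb : Val k, IsVal va ∧ IsVal vb ∧ Initial va ∧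
      PatternOf va vb η ∧ PatternOf va va η₀)
    (w₀ w₁ : List Γ) (u₀ u₁ : DVal k) (hu₀ : u₀ 0 = 0) :
    ReachPat A η s₀ u₀ w₀ s₁ u₁ w₁ ↔
      GReach A (s₀, η₀, u₀, w₀) (s₁, η, u₁, w₁) := by
  obtain ⟨va, vb, hva, -, hva0, hpat, hpat0⟩ := hinit
  have hGa := good_of_pattern hpat
  have hGa0 := good_of_pattern hpat0
  constructor
  · rintro ⟨v₀, v₁, hv₀, hv₁, h0, rfl, rfl, hp, hr⟩
    have hG := good_of_pattern hp
    have hG0 : Good (FF v₀ v₀) η₀ := by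
      refine hGa0.transfer ?_
      intro x y
      have := (hGa.pos (x.1, false) (y.1, false)).2.symm.trans
        (hG.pos (x.1, false) (y.1, false)).2
      obtain ⟨i, b⟩ := x
      obtain ⟨j, b'⟩ := y
      cases b <;> cases b' <;> exact this
    obtain ⟨-, η', hη', hg⟩ := reach_sim A h0 hv₀ hG0 hr
    rw [hG.unique hη']
    exact hg
  · intro hr
    let v₀ : Val k := fun i => u₀ i + Int.fract (va i)
    have hva0' : va 0 = 0 := hva0
    have h0 : v₀ 0 = 0 := by simp [v₀, hu₀, hva0']
    have hv₀ : IsVal v₀ := fun i => add_nonneg (Nat.cast_nonneg _) (Int.fract_nonneg _)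
    have hint : intPart v₀ = u₀ := by
      funext i
      simp [intPart, v₀]
    have hrel : relFract v₀ = relFract va := by
      funext i
      unfold relFract
      simp [v₀]
    have hFF : FF v₀ v₀ = FF va va := by
      funext x
      obtain ⟨i, b⟩ := x
      cases b <;> exact congrFun hrel i
    have hG0 : Good (FF v₀ v₀) η₀ := by rw [hFF]; exact hGa0
    rw [← hint] at hr
    obtain ⟨v₁, h1, h2, h3, h4⟩ := greach_sim A h0 hv₀ hG0 hr
    exact ⟨v₀, v₁, hv₀, h1, h0, hint, h3, pattern_of_good h0 h2, h4⟩

end PTApaper
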